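/- (Quasinormability criterion for 𝒟_{L^p}.) Let 1 ≤ p ≤ ∞ and let 0 ≤ s < t < u be real numbers. Then for every ε > 0 there exists C > 0 such that every φ ∈ 𝒮(ℝⁿ) admits a decomposition φ = φ₁ + φ₂ with φ₁, φ₂ ∈ 𝒮(ℝⁿ), ‖J_{−s} φ₁‖_p ≤ ε ‖J_{−t} φ‖_p, and ‖J_{−u} φ₂‖_p ≤ C ‖J_{−t} φ‖_p. (This is the inclusion L_t·B ⊂ ε·L_s·B + C·L_u·B of unit balls that characterizes the quasinormability of the Fréchet space 𝒟_{L^p}.) -/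

import Mathlib

open MeasureTheory Complex
open scoped FourierTransform ENNReal SchwartzMap

/-- The Bessel potential `J_z f = 𝓕⁻¹((1+|ξ|²)^(-z/2) · 𝓕 f)` of a function on `ℝⁿ`. -/
noncomputable def besselPotential (n : ℕ) (z : ℂ)
    (f : EuclideanSpace ℝ (Fin n) → ℂ) : EuclideanSpace ℝ (Fin n) → ℂ :=
  𝓕⁻ (fun ξ => ((1 : ℂ) + (‖ξ‖ : ℂ) ^ 2) ^ (-z / 2) * 𝓕 f ξ)

open scoped Convolution

section Young

theorem enorm_mul_convolution_le {G : Type*} [AddCommGroup G] [MeasurableSpace G]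
    {μ : Measure G} (K f : G → ℂ) (x : G) :
    ‖(K ⋆[ContinuousLinearMap.mul ℂ ℂ, μ] f) x‖ₑ ≤ ∫⁻ y, ‖K y‖ₑ * ‖f (x - y)‖ₑ ∂μ := by
  simpa [convolution_def] using
    enorm_integral_le_lintegral_enorm (μ := μ) (fun y => K y * f (x - y))

variable {G : Type*} [AddCommGroup G] [MeasurableSpace G] [MeasurableAdd₂ G] [MeasurableNeg G]
  {μ : Measure G} [SFinite μ] [μ.IsAddLeftInvariant]

/-- **Young's convolution inequality** `‖K ⋆ f‖_p ≤ ‖K‖_1 ‖f‖_p`. -/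
theorem eLpNorm_mul_convolution_le {K f : G → ℂ} (hK : AEStronglyMeasurable K μ)
    (hf : AEStronglyMeasurable f μ) {p : ℝ≥0∞} (hp : 1 ≤ p) :
    eLpNorm (K ⋆[ContinuousLinearMap.mul ℂ ℂ, μ] f) p μ ≤ eLpNorm K 1 μ * eLpNorm f p μ := by
  have hfx (x : G) : AEStronglyMeasurable (fun y => f (x - y)) μ :=
    hf.comp_quasiMeasurePreserving (quasiMeasurePreserving_sub_left_of_right_invariant μ x)
  rw [eLpNorm_one_eq_lintegral_enorm]
  rcases eq_or_ne p ∞ with rfl | hptop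
  · rw [eLpNorm_exponent_top, eLpNorm_exponent_top]
    refine eLpNormEssSup_le_of_ae_enorm_bound (Filter.Eventually.of_forall fun x => ?_)
    refine (enorm_mul_convolution_le K f x).trans ?_
    rw [← lintegral_mul_const'' _ hK.enorm]
    refine lintegral_mono_ae ?_
    filter_upwards [(quasiMeasurePreserving_sub_left_of_right_invariant μ x).ae
      (enorm_ae_le_eLpNormEssSup f μ)] with y hy
    gcongr
  · have hq : 1 ≤ p.toReal := by
      simpa using (ENNReal.toReal_le_toReal ENNReal.one_ne_top hptop).2 hp
    set q := p.toReal with hq_def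
    have hq0 : 0 < q := by linarith
    set κ := ∫⁻ y, ‖K y‖ₑ ∂μ with hκ
    have pointwise (x : G) : ‖(K ⋆[ContinuousLinearMap.mul ℂ ℂ, μ] f) x‖ₑ ^ q ≤
        κ ^ (q - 1) * ∫⁻ y, ‖K y‖ₑ * ‖f (x - y)‖ₑ ^ q ∂μ := by
      have holder := eLpNorm'_le_eLpNorm'_mul_rpow_measure_univ one_pos hq
        ((hfx x).mono_ac (withDensity_absolutelyContinuous μ fun y => ‖K y‖ₑ))
      simp only [eLpNorm', ENNReal.rpow_one, div_one, withDensity_apply _ MeasurableSet.univ,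
        setLIntegral_univ] at holder
      rw [lintegral_withDensity_eq_lintegral_mul₀ hK.enorm (hfx x).enorm,
        lintegral_withDensity_eq_lintegral_mul₀ hK.enorm ((hfx x).enorm.pow_const q)] at holder
      have := ENNReal.rpow_le_rpow ((enorm_mul_convolution_le K f x).trans holder) hq0.le
      rw [ENNReal.mul_rpow_of_nonneg _ _ hq0.le, ← ENNReal.rpow_mul, ← ENNReal.rpow_mul,
        one_div_mul_cancel hq0.ne', ENNReal.rpow_one, sub_mul, one_div_mul_cancel hq0.ne',
        one_mul, mul_comm] at this
      exact this
    have meas : AEMeasurable (fun z : G × G => ‖K z.2‖ₑ * ‖f (z.1 - z.2)‖ₑ ^ q) (μ.prod μ) :=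
      hK.enorm.comp_snd.mul ((hf.comp_quasiMeasurePreserving
        (quasiMeasurePreserving_sub_of_right_invariant μ μ)).enorm.pow_const q)
    have inner (y : G) : ∫⁻ x, ‖K y‖ₑ * ‖f (x - y)‖ₑ ^ q ∂μ =
        ‖K y‖ₑ * ∫⁻ x, ‖f x‖ₑ ^ q ∂μ := by
      have hfy : AEStronglyMeasurable (fun x => f (x - y)) μ :=
        hf.comp_quasiMeasurePreserving (measurePreserving_sub_right μ y).quasiMeasurePreserving
      rw [lintegral_const_mul'' _ (hfy.enorm.pow_const q),
        lintegral_sub_right_eq_self (fun x => ‖f x‖ₑ ^ q) y]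
    have key : ∫⁻ x, ‖(K ⋆[ContinuousLinearMap.mul ℂ ℂ, μ] f) x‖ₑ ^ q ∂μ ≤
        κ ^ q * ∫⁻ x, ‖f x‖ₑ ^ q ∂μ := by
      refine (lintegral_mono pointwise).trans_eq ?_
      rw [lintegral_const_mul'' _ meas.lintegral_prod_right', lintegral_lintegral_swap meas]
      simp_rw [inner]
      rw [lintegral_mul_const'' _ hK.enorm, ← mul_assoc, ← hκ]
      congr 1
      nth_rewrite 2 [← ENNReal.rpow_one κ]
      rw [← ENNReal.rpow_add_of_nonneg _ _ (by linarith) zero_le_one, sub_add_cancel]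
    rw [eLpNorm_eq_lintegral_rpow_enorm_toReal (by positivity) hptop,
      eLpNorm_eq_lintegral_rpow_enorm_toReal (by positivity) hptop, ← hq_def]
    refine (ENNReal.rpow_le_rpow key (by positivity)).trans_eq ?_
    rw [ENNReal.mul_rpow_of_nonneg _ _ (by positivity), ← ENNReal.rpow_mul,
      mul_one_div_cancel hq0.ne', ENNReal.rpow_one]

end Young

section FourierMultiplier

variable {V : Type*} [NormedAddCommGroup V] [InnerProductSpace ℝ V] [FiniteDimensional ℝ V]
  [MeasurableSpace V] [BorelSpace V]

/-- The Fourier multiplier whose symbol is the Fourier transform of an integrable kernel `K` acts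
on Schwartz functions as convolution with `K`. -/
theorem fourierInv_fourier_mul_eq_convolution {K : V → ℂ} (hK : Integrable K) (ψ : 𝓢(V, ℂ)) :
    𝓕⁻ (fun ξ => 𝓕 K ξ * 𝓕 (ψ : V → ℂ) ξ) = K ⋆[ContinuousLinearMap.mul ℂ ℂ] ψ := by
  have hF : 𝓕 (K ⋆[ContinuousLinearMap.mul ℂ ℂ] ψ) = fun ξ => 𝓕 K ξ * 𝓕 (ψ : V → ℂ) ξ :=
    funext fun ξ => Real.fourier_mul_convolution_eq hK ψ.integrable ξ
  have hcont : Continuous (K ⋆[ContinuousLinearMap.mul ℂ ℂ] ψ) := by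
    refine BddAbove.continuous_convolution_right_of_integrable _ ?_ hK ψ.continuous
    exact ⟨SchwartzMap.seminorm ℝ 0 0 ψ, by rintro _ ⟨x, rfl⟩; exact ψ.norm_le_seminorm ℝ x⟩
  have hint : Integrable (𝓕 (K ⋆[ContinuousLinearMap.mul ℂ ℂ] ψ)) := by
    rw [hF]
    refine Integrable.bdd_mul (c := ∫ v, ‖K v‖) (𝓕 ψ).integrable ?_ ?_
    · exact (VectorFourier.fourierIntegral_continuous Real.continuous_fourierChar
        continuous_inner hK).aestronglyMeasurable
    · exact Filter.Eventually.of_forall fun ξ =>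
        VectorFourier.norm_fourierIntegral_le_integral_norm _ _ _ _ _
  rw [← hF, hcont.fourierInv_fourier_eq (hK.integrable_convolution _ ψ.integrable) hint]

theorem eLpNorm_fourierInv_fourier_mul_le {K : V → ℂ} (hK : Integrable K) (ψ : 𝓢(V, ℂ))
    {p : ℝ≥0∞} (hp : 1 ≤ p) :
    eLpNorm (𝓕⁻ (fun ξ => 𝓕 K ξ * 𝓕 (ψ : V → ℂ) ξ)) p volume ≤
      eLpNorm K 1 volume * eLpNorm ψ p volume := by
  rw [fourierInv_fourier_mul_eq_convolution hK]
  exact eLpNorm_mul_convolution_le hK.aestronglyMeasurable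
    ψ.continuous.aestronglyMeasurable hp

open Real in
/-- Fourier transform of the normalized heat kernel. -/
theorem fourier_heatKernel {τ : ℝ} (hτ : 0 < τ) (ξ : V) :
    𝓕 (fun x : V => (((τ / π) ^ (-(Module.finrank ℝ V / 2 : ℝ)) *
      rexp (-(π ^ 2 / τ) * ‖x‖ ^ 2) : ℝ) : ℂ)) ξ = (rexp (-τ * ‖ξ‖ ^ 2) : ℝ) := by
  have hb : 0 < ((π ^ 2 / τ : ℝ) : ℂ).re := by rw [ofReal_re]; positivity
  have h := fourier_gaussian_innerProductSpace (V := V) hb ξ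
  have hpi : (π : ℂ) / ((π ^ 2 / τ : ℝ) : ℂ) = ((τ / π : ℝ) : ℂ) := by
    rw [← ofReal_div]; congr 1; field_simp
  have hexp : cexp (-π ^ 2 * ‖ξ‖ ^ 2 / ((π ^ 2 / τ : ℝ) : ℂ)) = (rexp (-τ * ‖ξ‖ ^ 2) : ℝ) := by
    push_cast; congr 1
    have : (π : ℂ) ≠ 0 := by simp
    have : (τ : ℂ) ≠ 0 := by exact_mod_cast hτ.ne'
    field_simp
  have hpow : (((τ / π : ℝ) : ℂ)) ^ (Module.finrank ℝ V / 2 : ℂ) =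
      (((τ / π) ^ (Module.finrank ℝ V / 2 : ℝ) : ℝ) : ℂ) := by
    rw [ofReal_cpow (by positivity)]; push_cast; rfl
  rw [hpi, hexp, hpow] at h
  simp only [Real.fourier_eq] at h ⊢
  have hfun : (fun v : V => 𝐞 (-inner ℝ v ξ) • (((τ / π) ^ (-(Module.finrank ℝ V / 2 : ℝ)) *
      rexp (-(π ^ 2 / τ) * ‖v‖ ^ 2) : ℝ) : ℂ)) = fun v =>
      (((τ / π) ^ (-(Module.finrank ℝ V / 2 : ℝ)) : ℝ) : ℂ) *
        (𝐞 (-inner ℝ v ξ) • cexp (-((π ^ 2 / τ : ℝ) : ℂ) * ‖v‖ ^ 2)) := by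
    ext v
    rw [mul_smul_comm]
    push_cast
    rfl
  rw [hfun, integral_const_mul, h, ← mul_assoc, ← ofReal_mul, ← Real.rpow_add (by positivity)]
  simp

open Real in
theorem integral_heatKernel {τ : ℝ} (hτ : 0 < τ) :
    ∫ x : V, (τ / π) ^ (-(Module.finrank ℝ V / 2 : ℝ)) * rexp (-(π ^ 2 / τ) * ‖x‖ ^ 2) = 1 := by
  have h := fourier_heatKernel (V := V) hτ 0
  rw [Real.fourier_eq] at h
  simp only [inner_zero_right, neg_zero, AddChar.map_zero_eq_one, one_smul, norm_zero, ne_eq,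
    OfNat.ofNat_ne_zero, not_false_eq_true, zero_pow, mul_zero, Real.exp_zero] at h
  rw [integral_complex_ofReal] at h
  exact_mod_cast h

/-- The Bessel kernel: for `a > 0` the function `(1 + ‖ξ‖²) ^ (-a)` is the Fourier transform of an
integrable function. -/
theorem exists_integrable_fourier_eq_one_add_norm_sq_rpow_neg {a : ℝ} (ha : 0 < a) :
    ∃ G : V → ℂ, Integrable G ∧ ∀ ξ, 𝓕 G ξ = (((1 + ‖ξ‖ ^ 2) ^ (-a) : ℝ) : ℂ) := by
  let w : ℝ → ℝ := fun τ => τ ^ (a - 1) * Real.exp (-τ)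
  let h : ℝ → V → ℝ := fun τ x => (τ / Real.pi) ^ (-(Module.finrank ℝ V / 2 : ℝ)) *
    Real.exp (-(Real.pi ^ 2 / τ) * ‖x‖ ^ 2)
  let ν : Measure ℝ := volume.restrict (Set.Ioi 0)
  have hν : ∀ᵐ τ ∂ν, 0 < τ := ae_restrict_mem measurableSet_Ioi
  let F : V × ℝ → ℂ := fun z => ((w z.2 * h z.2 z.1 : ℝ) : ℂ)
  have hmeas : Measurable F := by
    simp only [F, w, h]
    fun_prop
  have hheat {τ : ℝ} (hτ : 0 < τ) : Integrable (h τ) := by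
    refine Integrable.of_integral_ne_zero ?_
    rw [integral_heatKernel hτ]
    exact one_ne_zero
  have hF : Integrable F (volume.prod ν) := by
    rw [integrable_prod_iff' hmeas.aestronglyMeasurable]
    constructor
    · filter_upwards [hν] with τ hτ
      exact ((hheat hτ).const_mul (w τ)).ofReal
    · have hw : Integrable w ν := by
        refine (Real.GammaIntegral_convergent ha).congr_fun (fun τ _ => mul_comm _ _)
          measurableSet_Ioi
      refine hw.congr ?_
      filter_upwards [hν] with τ hτ
      have hpos (x : V) : ‖F (x, τ)‖ = w τ * h τ x := by
        simp only [F, norm_real, Real.norm_eq_abs]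
        refine abs_of_nonneg ?_
        simp only [w, h]
        positivity
      simp_rw [hpos]
      rw [integral_const_mul, integral_heatKernel hτ, mul_one]
  refine ⟨fun x => ((Real.Gamma a)⁻¹ : ℝ) • ∫ τ, F (x, τ) ∂ν,
    hF.integral_prod_left.smul (Real.Gamma a)⁻¹, fun ξ => ?_⟩
  have hinner {τ : ℝ} (hτ : 0 < τ) : ∫ x, Real.fourierChar (-inner ℝ x ξ) • F (x, τ) =
      ((τ ^ (a - 1) * Real.exp (-((1 + ‖ξ‖ ^ 2) * τ)) : ℝ) : ℂ) := by
    have hfour := fourier_heatKernel (V := V) hτ ξ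
    rw [Real.fourier_eq] at hfour
    have hfun : (fun x => Real.fourierChar (-inner ℝ x ξ) • F (x, τ)) = fun x =>
        (w τ : ℂ) * (Real.fourierChar (-inner ℝ x ξ) • (h τ x : ℂ)) := by
      ext x
      rw [mul_smul_comm, ← ofReal_mul]
    rw [hfun, integral_const_mul, hfour, ← ofReal_mul]
    simp only [w]
    rw [mul_assoc, ← Real.exp_add]
    ring_nf
  have hswap : ∫ x, Real.fourierChar (-inner ℝ x ξ) • ∫ τ, F (x, τ) ∂ν =
      ∫ τ, (∫ x, Real.fourierChar (-inner ℝ x ξ) • F (x, τ)) ∂ν := by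
    simp_rw [Circle.smul_def, ← integral_smul]
    refine integral_integral_swap (hF.bdd_mul (c := 1) ?_ (.of_forall fun z => ?_))
    · exact Continuous.aestronglyMeasurable (by fun_prop)
    · rw [Circle.norm_coe]
  have hΓ : Real.Gamma a ≠ 0 := (Real.Gamma_pos_of_pos ha).ne'
  rw [Real.fourier_eq]
  simp_rw [smul_comm _ (Real.Gamma a)⁻¹]
  rw [integral_smul, hswap, integral_congr_ae (hν.mono fun τ hτ => hinner hτ), integral_complex_ofReal,
    Real.integral_rpow_mul_exp_neg_mul_Ioi ha (by positivity), real_smul, ← ofReal_mul, mul_comm,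
    mul_assoc, mul_inv_cancel₀ hΓ, mul_one, one_div, Real.inv_rpow (by positivity),
    Real.rpow_neg (by positivity)]

end FourierMultiplier

section BesselPotential

variable {n : ℕ}

theorem besselPotential_neg_ofReal (s : ℝ) (f : EuclideanSpace ℝ (Fin n) → ℂ) :
    besselPotential n (-(s : ℂ)) f =
      𝓕⁻ (fun ξ => (((1 + ‖ξ‖ ^ 2) ^ (s / 2) : ℝ) : ℂ) * 𝓕 f ξ) := by
  unfold besselPotential
  congr 1
  ext ξ
  rw [ofReal_cpow (by positivity)]
  push_cast
  rw [neg_neg]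

theorem hasTemperateGrowth_ofReal_one_add_norm_sq_rpow (r : ℝ) :
    (fun ξ : EuclideanSpace ℝ (Fin n) =>
      (((1 + ‖ξ‖ ^ 2) ^ r : ℝ) : ℂ)).HasTemperateGrowth := by
  fun_prop

/-- If `(1 + |ξ|²)^(s/2) 𝓕χ = 𝓕K · (1 + |ξ|²)^(t/2) 𝓕φ` with an integrable kernel `K`, then
`‖J_{-s} χ‖_p ≤ ‖K‖_1 ‖J_{-t} φ‖_p`. -/
theorem eLpNorm_besselPotential_le {p : ℝ≥0∞} (hp : 1 ≤ p) {s t : ℝ}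
    {K : EuclideanSpace ℝ (Fin n) → ℂ} (hK : Integrable K)
    {φ χ : 𝓢(EuclideanSpace ℝ (Fin n), ℂ)}
    (h : ∀ ξ, (((1 + ‖ξ‖ ^ 2) ^ (s / 2) : ℝ) : ℂ) * 𝓕 χ ξ =
      𝓕 K ξ * ((((1 + ‖ξ‖ ^ 2) ^ (t / 2) : ℝ) : ℂ) * 𝓕 φ ξ)) :
    eLpNorm (besselPotential n (-(s : ℂ)) χ) p volume ≤
      eLpNorm K 1 volume * eLpNorm (besselPotential n (-(t : ℂ)) φ) p volume := by
  let Ψ : 𝓢(EuclideanSpace ℝ (Fin n), ℂ) :=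
    SchwartzMap.smulLeftCLM ℂ (fun ξ => (((1 + ‖ξ‖ ^ 2) ^ (t / 2) : ℝ) : ℂ)) (𝓕 φ)
  have hΨ (ξ) : Ψ ξ = (((1 + ‖ξ‖ ^ 2) ^ (t / 2) : ℝ) : ℂ) * 𝓕 φ ξ :=
    SchwartzMap.smulLeftCLM_apply_apply (hasTemperateGrowth_ofReal_one_add_norm_sq_rpow _) _ ξ
  have hφ : besselPotential n (-(t : ℂ)) φ = (𝓕⁻ Ψ : 𝓢(EuclideanSpace ℝ (Fin n), ℂ)) := by
    rw [besselPotential_neg_ofReal, SchwartzMap.fourierInv_coe]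
    exact congrArg _ (funext fun ξ => (hΨ ξ).symm)
  have hχ : besselPotential n (-(s : ℂ)) χ =
      𝓕⁻ (fun ξ => 𝓕 K ξ * 𝓕 ((𝓕⁻ Ψ : 𝓢(EuclideanSpace ℝ (Fin n), ℂ)) :
        EuclideanSpace ℝ (Fin n) → ℂ) ξ) := by
    rw [besselPotential_neg_ofReal, ← SchwartzMap.fourier_coe, ← SchwartzMap.fourier_coe,
      FourierTransform.fourier_fourierInv_eq]
    exact congrArg _ (funext fun ξ => by rw [h, hΨ])
  rw [hφ, hχ]
  exact eLpNorm_fourierInv_fourier_mul_le hK _ hp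

end BesselPotential

/-- Quasinormability criterion for `𝒟_{L^p}`: for `1 ≤ p ≤ ∞`, `0 ≤ s < t < u` and every
`ε > 0` there is `C > 0` such that every Schwartz `φ` decomposes as `φ = φ₁ + φ₂` with
`‖J_{-s} φ₁‖_p ≤ ε ‖J_{-t} φ‖_p` and `‖J_{-u} φ₂‖_p ≤ C ‖J_{-t} φ‖_p`. -/
theorem quasinormability_DLp (n : ℕ) (p : ℝ≥0∞) (hp : 1 ≤ p)
    (s t u : ℝ) (hs : 0 ≤ s) (hst : s < t) (htu : t < u) :
    ∀ ε : ℝ, 0 < ε → ∃ C : ℝ, 0 < C ∧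
      ∀ φ : 𝓢(EuclideanSpace ℝ (Fin n), ℂ),
        ∃ φ₁ φ₂ : 𝓢(EuclideanSpace ℝ (Fin n), ℂ), φ = φ₁ + φ₂ ∧
          eLpNorm (besselPotential n (-(s : ℂ)) ⇑φ₁) p volume ≤
            ENNReal.ofReal ε * eLpNorm (besselPotential n (-(t : ℂ)) ⇑φ) p volume ∧
          eLpNorm (besselPotential n (-(u : ℂ)) ⇑φ₂) p volume ≤
            ENNReal.ofReal C * eLpNorm (besselPotential n (-(t : ℂ)) ⇑φ) p volume := by
  intro ε hε
  obtain ⟨G, hG, hGF⟩ := exists_integrable_fourier_eq_one_add_norm_sq_rpow_neg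
    (V := EuclideanSpace ℝ (Fin n)) (a := (t - s) / 2) (by linarith)
  obtain ⟨g, hg₁, hg₂, hg₃⟩ :=
    (memLp_one_iff_integrable.2 hG).exist_eLpNorm_sub_le ENNReal.one_ne_top le_rfl hε
  let S : 𝓢(EuclideanSpace ℝ (Fin n), ℂ) := hg₁.toSchwartzMap hg₂
  let b (r : ℝ) : EuclideanSpace ℝ (Fin n) → ℂ := fun ξ => (((1 + ‖ξ‖ ^ 2) ^ r : ℝ) : ℂ)
  have hb (r : ℝ) : (b r).HasTemperateGrowth := hasTemperateGrowth_ofReal_one_add_norm_sq_rpow r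
  have hb_mul (r r' : ℝ) (ξ) : b r ξ * b r' ξ = b (r + r') ξ := by
    simp only [b]
    rw [← ofReal_mul, ← Real.rpow_add (by positivity)]
  let M (r : ℝ) : 𝓢(EuclideanSpace ℝ (Fin n), ℂ) := SchwartzMap.smulLeftCLM ℂ (b r) (𝓕 S)
  have hM (r : ℝ) (ξ) : M r ξ = b r ξ * 𝓕 S ξ := SchwartzMap.smulLeftCLM_apply_apply (hb r) _ ξ
  let L : 𝓢(EuclideanSpace ℝ (Fin n), ℂ) := 𝓕⁻ (M ((u - s) / 2))
  have hL : eLpNorm L 1 volume ≠ ∞ := (L.memLp 1 volume).eLpNorm_ne_top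
  refine ⟨(eLpNorm L 1 volume).toReal + 1, by positivity, fun φ => ?_⟩
  let φ₂ : 𝓢(EuclideanSpace ℝ (Fin n), ℂ) :=
    SchwartzMap.fourierMultiplierCLM ℂ (M ((t - s) / 2)) φ
  have hφ₂ (ξ) : 𝓕 φ₂ ξ = b ((t - s) / 2) ξ * 𝓕 S ξ * 𝓕 φ ξ := by
    simp only [φ₂, SchwartzMap.fourierMultiplierCLM_apply,
      FourierTransform.fourier_fourierInv_eq]
    rw [SchwartzMap.smulLeftCLM_apply_apply (SchwartzMap.hasTemperateGrowth _), hM, smul_eq_mul]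
  refine ⟨φ - φ₂, φ₂, (sub_add_cancel φ φ₂).symm, ?_, ?_⟩
  · refine (eLpNorm_besselPotential_le (t := t) (φ := φ) hp (hG.sub S.integrable)
      fun ξ => ?_).trans ?_
    · have hsub : 𝓕 (G - ⇑S) ξ = b (-((t - s) / 2)) ξ - 𝓕 S ξ := by
        rw [← show 𝓕 G ξ = b (-((t - s) / 2)) ξ from hGF ξ, SchwartzMap.fourier_coe]
        simp only [Real.fourier_eq, Pi.sub_apply, smul_sub]
        exact integral_sub ((Real.fourierIntegral_convergent_iff ξ).2 hG)
          ((Real.fourierIntegral_convergent_iff ξ).2 S.integrable)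
      have hφ₁ : 𝓕 (φ - φ₂) = 𝓕 φ - 𝓕 φ₂ := map_sub (FourierTransform.fourierCLM ℂ _) φ φ₂
      rw [hsub, hφ₁, sub_apply, hφ₂]
      change b (s / 2) ξ * _ = _ * (b (t / 2) ξ * _)
      have h₁ : b (s / 2) ξ = b (-((t - s) / 2)) ξ * b (t / 2) ξ := by
        rw [hb_mul]; congr 1; ring
      have h₂ : b (t / 2) ξ = b (s / 2) ξ * b ((t - s) / 2) ξ := by
        rw [hb_mul]; congr 1; ring
      linear_combination (𝓕 φ ξ) * h₁ + 𝓕 S ξ * 𝓕 φ ξ * h₂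
    · gcongr
      exact hg₃
  · refine (eLpNorm_besselPotential_le (t := t) (φ := φ) hp L.integrable fun ξ => ?_).trans ?_
    · have hLF : 𝓕 (⇑L) ξ = b ((u - s) / 2) ξ * 𝓕 S ξ := by
        rw [← SchwartzMap.fourier_coe, FourierTransform.fourier_fourierInv_eq, hM]
      rw [hLF, hφ₂]
      change b (u / 2) ξ * _ = _ * (b (t / 2) ξ * _)
      have h₃ : b (u / 2) ξ * b ((t - s) / 2) ξ = b ((u - s) / 2) ξ * b (t / 2) ξ := by
        rw [hb_mul, hb_mul]; congr 1; ring
      linear_combination 𝓕 S ξ * 𝓕 φ ξ * h₃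
    · gcongr
      rw [← ENNReal.ofReal_toReal hL]
      exact ENNReal.ofReal_le_ofReal (by simp)
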